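/- Geodesics of the generalized Levi-Civita connection of τ coincide with geodesics of its symmetric part g: let I ⊆ ℝ be an open interval and χ : I → U a smooth curve with components χ^μ. Then χ satisfies the geodesic equation of Γ, namely (d²χ^μ/dt²)(t) + Σ_{ρ,α} Γ^μ_{ρα}(χ(t)) (dχ^ρ/dt)(t) (dχ^α/dt)(t) = 0 for all t ∈ I and all μ, if and only if χ satisfies the geodesic equation of the Christoffel symbols Γg of g, namely (d²χ^μ/dt²)(t) + Σ_{ρ,α} Γg^μ_{ρα}(χ(t)) (dχ^ρ/dt)(t) (dχ^α/dt)(t) = 0 for all t ∈ I and all μ, where Γg^α_{μβ} := (1/2) Σ_δ g^{αδ} (∂_μ g_{βδ} + ∂_β g_{δμ} − ∂_δ g_{βμ}). -/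

import Mathlib

open scoped BigOperators

/-- The partial derivative `∂_μ f` of `f : ℝⁿ → ℝ` in the `μ`-th coordinate direction. -/
noncomputable def pd {n : ℕ} (μ : Fin n) (f : (Fin n → ℝ) → ℝ) (x : Fin n → ℝ) : ℝ :=
  fderiv ℝ f x (Pi.single μ 1)

/-- The symmetric part `g_{μν} = (τ_{μν} + τ_{νμ})/2` of `τ`. -/
noncomputable def gPart {n : ℕ} (τ : (Fin n → ℝ) → Matrix (Fin n) (Fin n) ℝ)
    (x : Fin n → ℝ) : Matrix (Fin n) (Fin n) ℝ :=
  fun μ ν => (τ x μ ν + τ x ν μ) / 2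

/-- The antisymmetric part `ω_{μν} = (τ_{μν} - τ_{νμ})/2` of `τ`. -/
noncomputable def wPart {n : ℕ} (τ : (Fin n → ℝ) → Matrix (Fin n) (Fin n) ℝ)
    (x : Fin n → ℝ) : Matrix (Fin n) (Fin n) ℝ :=
  fun μ ν => (τ x μ ν - τ x ν μ) / 2

/-- The entries `g^{μν}` of the inverse matrix `g(x)⁻¹`. -/
noncomputable def gInv {n : ℕ} (τ : (Fin n → ℝ) → Matrix (Fin n) (Fin n) ℝ)
    (x : Fin n → ℝ) : Matrix (Fin n) (Fin n) ℝ :=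
  (gPart τ x)⁻¹

/-- The generalized Christoffel symbols
`Γ^α_{μβ} = (1/2) Σ_δ g^{αδ} (∂_μ τ_{βδ} + ∂_β τ_{δμ} − ∂_δ τ_{βμ})` of `τ`. -/
noncomputable def GammaT {n : ℕ} (τ : (Fin n → ℝ) → Matrix (Fin n) (Fin n) ℝ)
    (α μ β : Fin n) (x : Fin n → ℝ) : ℝ :=
  (1 / 2) * ∑ δ, gInv τ x α δ *
    (pd μ (fun y => τ y β δ) x + pd β (fun y => τ y δ μ) x - pd δ (fun y => τ y β μ) x)

/-- The classical Christoffel symbols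
`Γg^α_{μβ} = (1/2) Σ_δ g^{αδ} (∂_μ g_{βδ} + ∂_β g_{δμ} − ∂_δ g_{βμ})`
of the symmetric part `g` of `τ`. -/
noncomputable def GammaG {n : ℕ} (τ : (Fin n → ℝ) → Matrix (Fin n) (Fin n) ℝ)
    (α μ β : Fin n) (x : Fin n → ℝ) : ℝ :=
  (1 / 2) * ∑ δ, gInv τ x α δ *
    (pd μ (fun y => gPart τ y β δ) x + pd β (fun y => gPart τ y δ μ) x -
      pd δ (fun y => gPart τ y β μ) x)

theorem pd_gPart_aux {n : ℕ} {U : Set (Fin n → ℝ)} (hU : IsOpen U)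
    {τ : (Fin n → ℝ) → Matrix (Fin n) (Fin n) ℝ}
    (hτ : ∀ μ ν : Fin n, ContDiffOn ℝ (⊤ : ℕ∞) (fun x => τ x μ ν) U)
    {x : Fin n → ℝ} (hx : x ∈ U) (μ a b : Fin n) :
    pd μ (fun y => gPart τ y a b) x
      = (pd μ (fun y => τ y a b) x + pd μ (fun y => τ y b a) x) / 2 := by
  have hd : ∀ a b, DifferentiableAt ℝ (fun y => τ y a b) x := fun a b =>
    ((hτ a b).contDiffAt (hU.mem_nhds hx)).differentiableAt (by simp)
  have h := (((hd a b).hasFDerivAt.add (hd b a).hasFDerivAt).const_mul (1/2 : ℝ))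
  have e : (fun y => gPart τ y a b) = fun y => (1/2 : ℝ) * (τ y a b + τ y b a) := by
    funext y; simp only [gPart]; ring
  unfold pd
  rw [e]
  have h2 := h.fderiv
  simp only [Pi.add_apply] at h2
  rw [h2]
  simp
  ring

theorem Gamma_symm_aux {n : ℕ} {U : Set (Fin n → ℝ)} (hU : IsOpen U)
    {τ : (Fin n → ℝ) → Matrix (Fin n) (Fin n) ℝ}
    (hτ : ∀ μ ν : Fin n, ContDiffOn ℝ (⊤ : ℕ∞) (fun x => τ x μ ν) U)
    {x : Fin n → ℝ} (hx : x ∈ U) (α μ β : Fin n) :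
    GammaT τ α μ β x + GammaT τ α β μ x = GammaG τ α μ β x + GammaG τ α β μ x := by
  simp only [GammaT, GammaG, pd_gPart_aux hU hτ hx, ← mul_add, ← Finset.sum_add_distrib]
  congr 1
  refine Finset.sum_congr rfl fun δ _ => ?_
  ring

theorem sum_aux {n : ℕ} (A B : Fin n → Fin n → ℝ) (v : Fin n → ℝ)
    (h : ∀ i j, A i j + A j i = B i j + B j i) :
    ∑ i, ∑ j, A i j * v i * v j = ∑ i, ∑ j, B i j * v i * v j := by
  have key : ∀ C : Fin n → Fin n → ℝ, 2 * ∑ i, ∑ j, C i j * v i * v j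
      = ∑ i, ∑ j, (C i j + C j i) * v i * v j := by
    intro C
    have hc : ∑ i, ∑ j, C i j * v i * v j = ∑ i, ∑ j, C j i * v i * v j := by
      rw [Finset.sum_comm]
      exact Finset.sum_congr rfl fun i _ => Finset.sum_congr rfl fun j _ => by ring
    simp only [add_mul, Finset.sum_add_distrib]
    rw [← hc]; ring
  have hA := key A
  simp only [h] at hA
  rw [← key B] at hA
  linarith

/-- Geodesics of the generalized Levi-Civita connection of `τ` coincide
with geodesics of its symmetric part `g`: a smooth curve `χ` in `U`, defined on an open
interval `I ⊆ ℝ`, satisfies the geodesic equation of `Γ` if and only if it satisfies the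
geodesic equation of the Christoffel symbols `Γg` of `g`. -/
theorem statement9 (n : ℕ) (hn : 1 ≤ n) (U : Set (Fin n → ℝ)) (hU : IsOpen U)
    (τ : (Fin n → ℝ) → Matrix (Fin n) (Fin n) ℝ)
    (hτ : ∀ μ ν : Fin n, ContDiffOn ℝ (⊤ : ℕ∞) (fun x => τ x μ ν) U)
    (hg : ∀ x ∈ U, IsUnit (gPart τ x).det)
    (I : Set ℝ) (hI : IsOpen I) (hI' : I.OrdConnected)
    (χ : ℝ → (Fin n → ℝ)) (hχ : ContDiffOn ℝ (⊤ : ℕ∞) χ I)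
    (hχU : ∀ t ∈ I, χ t ∈ U) :
    (∀ t ∈ I, ∀ μ : Fin n,
        deriv (deriv fun s => χ s μ) t +
          ∑ ρ, ∑ α, GammaT τ μ ρ α (χ t) *
            deriv (fun s => χ s ρ) t * deriv (fun s => χ s α) t = 0) ↔
    (∀ t ∈ I, ∀ μ : Fin n,
        deriv (deriv fun s => χ s μ) t +
          ∑ ρ, ∑ α, GammaG τ μ ρ α (χ t) *
            deriv (fun s => χ s ρ) t * deriv (fun s => χ s α) t = 0) := by
  refine forall_congr' fun t => forall_congr' fun ht => forall_congr' fun μ => ?_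
  rw [sum_aux (fun ρ α => GammaT τ μ ρ α (χ t)) (fun ρ α => GammaG τ μ ρ α (χ t))
    (fun ρ => deriv (fun s => χ s ρ) t)
    (fun i j => Gamma_symm_aux hU hτ (hχU t ht) μ i j)]
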